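/- If S_u satisfies Dunford's condition (C), then r(S_u) = R₃⁺(S_u), and moreover for every nonzero x ∈ H, limsup_{n→∞} ‖B_n x‖^{1/n} = lim_{n→∞} [sup_{k≥0} ‖B_{n+k}x‖/‖B_k x‖]^{1/n}. -/

import Mathlib

open Filter Topology ENNReal

noncomputable section

/-- The local resolvent set of `T` at `x`. -/
def localResolventSet {E : Type*} [NormedAddCommGroup E] [NormedSpace ℂ E]
    (T : E →L[ℂ] E) (x : E) : Set ℂ :=
  {l : ℂ | ∃ U : Set ℂ, IsOpen U ∧ l ∈ U ∧ ∃ f : ℂ → E, AnalyticOnNhd ℂ f U ∧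
    ∀ m ∈ U, T (f m) - m • f m = x}

/-- The local spectrum of `T` at `x`. -/
def localSpectrum {E : Type*} [NormedAddCommGroup E] [NormedSpace ℂ E]
    (T : E →L[ℂ] E) (x : E) : Set ℂ :=
  (localResolventSet T x)ᶜ

/-- The local spectral radius of `T` at `x`: `limsup ‖Tⁿx‖^{1/n}`. -/
def localSpecRad {E : Type*} [NormedAddCommGroup E] [NormedSpace ℂ E]
    (T : E →L[ℂ] E) (x : E) : ℝ≥0∞ :=
  limsup (fun n : ℕ => (‖(T ^ n) x‖₊ : ℝ≥0∞) ^ (1 / n : ℝ)) atTop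

/-- The lower bound `m(T) = inf {‖Tx‖ : ‖x‖ = 1}` of an operator. -/
def lowerBound {E : Type*} [NormedAddCommGroup E] [NormedSpace ℂ E]
    (T : E →L[ℂ] E) : ℝ :=
  sInf ((fun x => ‖T x‖) '' {x : E | ‖x‖ = 1})

/-- `r₁(T) = lim m(Tⁿ)^{1/n} = sup_{n ≥ 1} m(Tⁿ)^{1/n}`. -/
def r1 {E : Type*} [NormedAddCommGroup E] [NormedSpace ℂ E]
    (T : E →L[ℂ] E) : ℝ≥0∞ :=
  ⨆ n : ℕ, ENNReal.ofReal (lowerBound (T ^ (n + 1))) ^ (1 / (n + 1) : ℝ)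

/-- The point spectrum: the set of eigenvalues. -/
def pointSpectrum {E : Type*} [NormedAddCommGroup E] [NormedSpace ℂ E]
    (T : E →L[ℂ] E) : Set ℂ :=
  {l : ℂ | ∃ x : E, x ≠ 0 ∧ T x = l • x}

/-- The set of points where `T` fails the single-valued extension property. -/
def svepFails {E : Type*} [NormedAddCommGroup E] [NormedSpace ℂ E]
    (T : E →L[ℂ] E) : Set ℂ :=
  {l₀ : ℂ | ¬ ∀ r : ℝ, 0 < r → ∀ f : ℂ → E, AnalyticOnNhd ℂ f (Metric.ball l₀ r) →
      (∀ m ∈ Metric.ball l₀ r, T (f m) - m • f m = 0) →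
      ∀ m ∈ Metric.ball l₀ r, f m = 0}

/-- Dunford's condition (C). -/
def DunfordC {E : Type*} [NormedAddCommGroup E] [NormedSpace ℂ E]
    (T : E →L[ℂ] E) : Prop :=
  ∀ F : Set ℂ, IsClosed F → IsClosed {y : E | localSpectrum T y ⊆ F}

/-- Bishop's property (β). -/
def BishopBeta {E : Type*} [NormedAddCommGroup E] [NormedSpace ℂ E]
    (T : E →L[ℂ] E) : Prop :=
  ∀ U : Set ℂ, IsOpen U → ∀ f : ℕ → ℂ → E,
    (∀ m, AnalyticOnNhd ℂ (f m) U) →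
    TendstoLocallyUniformlyOn (fun m z => T (f m z) - z • f m z) 0 atTop U →
    TendstoLocallyUniformlyOn f 0 atTop U

section Shift

variable {H : Type*} [NormedAddCommGroup H] [InnerProductSpace ℂ H] [CompleteSpace H]

/-- `wB A n = B_n = A_{n-1} ⋯ A_1 A_0`, with `B_0 = 1`. -/
def wB (A : ℕ → (H →L[ℂ] H)ˣ) : ℕ → (H →L[ℂ] H)ˣ
  | 0 => 1
  | n + 1 => A n * wB A n

/-- `wBi A n = B_n⁻¹` as an operator. -/
def wBi (A : ℕ → (H →L[ℂ] H)ˣ) (n : ℕ) : H →L[ℂ] H :=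
  (((wB A n)⁻¹ : (H →L[ℂ] H)ˣ) : H →L[ℂ] H)

/-- `R₂⁺(S_u) = sup_{x ≠ 0} 1 / limsup ‖(B_n*)⁻¹ x‖^{1/n}` (with `1/0 = ∞`). -/
def R2plus (A : ℕ → (H →L[ℂ] H)ˣ) : ℝ≥0∞ :=
  ⨆ (x : H) (_ : x ≠ 0),
    (limsup (fun n : ℕ =>
      (‖ContinuousLinearMap.adjoint (wBi A n) x‖₊ : ℝ≥0∞) ^ (1 / n : ℝ)) atTop)⁻¹

/-- `R₂⁻(S_u) = inf_{x ≠ 0} 1 / limsup ‖(B_n*)⁻¹ x‖^{1/n}` (with `1/0 = ∞`). -/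
def R2minus (A : ℕ → (H →L[ℂ] H)ˣ) : ℝ≥0∞ :=
  ⨅ (x : H) (_ : x ≠ 0),
    (limsup (fun n : ℕ =>
      (‖ContinuousLinearMap.adjoint (wBi A n) x‖₊ : ℝ≥0∞) ^ (1 / n : ℝ)) atTop)⁻¹

/-- `R₃⁺(S_u) = sup_{x ≠ 0} limsup ‖B_n x‖^{1/n}`. -/
def R3plus (A : ℕ → (H →L[ℂ] H)ˣ) : ℝ≥0∞ :=
  ⨆ (x : H) (_ : x ≠ 0),
    limsup (fun n : ℕ => (‖(wB A n : H →L[ℂ] H) x‖₊ : ℝ≥0∞) ^ (1 / n : ℝ)) atTop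

/-- `R₃⁻(S_u) = inf_{x ≠ 0} limsup ‖B_n x‖^{1/n}`. -/
def R3minus (A : ℕ → (H →L[ℂ] H)ˣ) : ℝ≥0∞ :=
  ⨅ (x : H) (_ : x ≠ 0),
    limsup (fun n : ℕ => (‖(wB A n : H →L[ℂ] H) x‖₊ : ℝ≥0∞) ^ (1 / n : ℝ)) atTop

/-- `r₂(S_u) = 1 / limsup ‖B_n⁻¹‖^{1/n}` (with `1/0 = ∞`). -/
def r2 (A : ℕ → (H →L[ℂ] H)ˣ) : ℝ≥0∞ :=
  (limsup (fun n : ℕ => (‖wBi A n‖₊ : ℝ≥0∞) ^ (1 / n : ℝ)) atTop)⁻¹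

/-- `r₃(S_u) = 1 / liminf ‖B_n⁻¹‖^{1/n}` (with `1/0 = ∞`). -/
def r3 (A : ℕ → (H →L[ℂ] H)ˣ) : ℝ≥0∞ :=
  (liminf (fun n : ℕ => (‖wBi A n‖₊ : ℝ≥0∞) ^ (1 / n : ℝ)) atTop)⁻¹

/-- `R_𝒜(x) = 1 / limsup ‖B_n⁻¹ x_n‖^{1/n}` (with `1/0 = ∞`). -/
def RA (A : ℕ → (H →L[ℂ] H)ˣ) (x : lp (fun _ : ℕ => H) 2) : ℝ≥0∞ :=
  (limsup (fun n : ℕ => (‖wBi A n (x n)‖₊ : ℝ≥0∞) ^ (1 / n : ℝ)) atTop)⁻¹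

end Shift

/-!
If `T` has no nonzero eigenvalue, then the local resolvent equation of `T` at `y` has at most one
solution outside `0`, and near infinity that solution is the series `-∑ μ⁻ⁿ⁻¹ Tⁿ y`. Hence
`localSpecRad T y ≤ r` if and only if the local spectrum of `T` at `y` lies in the closed disc of
radius `r`. Condition (C) then makes `{y | localSpecRad T y ≤ r}` a closed subspace, and by the
uniform boundedness principle `‖Tⁿ y‖ ≤ C Rⁿ ‖y‖` on it, with `C` independent of `y`, for every
`R > r`.

A weighted shift has no nonzero eigenvalue. For the second claim, take `y` in the orbit of
`(x, 0, 0, …)` and `r` its local spectral radius. For the first, take `r = R₃⁺`: the closed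
subspace contains the orbits of all the `(x, 0, 0, …)`, which span a dense subspace.
-/

open scoped NNReal

lemma le_of_forall_coe_gt {a b : ℝ≥0∞} (h : ∀ R : ℝ≥0, a < R → b ≤ R) : b ≤ a :=
  le_of_forall_gt_imp_ge_of_dense fun c hc => by
    induction c with
    | top => exact le_top
    | coe R => exact h R hc

section RootGrowth

variable {a : ℕ → ℝ≥0∞}

lemma limsup_rpow_one_div_le_of_le_mul_pow {C R : ℝ≥0} (h : ∀ n, a n ≤ C * R ^ n) :
    limsup (fun n : ℕ => a n ^ (1 / n : ℝ)) atTop ≤ R := by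
  have limsup_root_C : limsup (fun n : ℕ => (C : ℝ≥0∞) ^ (1 / n : ℝ)) atTop ≤ 1 :=
    le_of_forall_gt_imp_ge_of_dense fun _ hy =>
      limsup_le_of_le (by isBoundedDefault) (ENNReal.eventually_pow_one_div_le coe_ne_top hy)
  calc limsup (fun n : ℕ => a n ^ (1 / n : ℝ)) atTop
      ≤ limsup (fun n : ℕ => (C : ℝ≥0∞) ^ (1 / n : ℝ) * R) atTop := by
        refine limsup_le_limsup ?_
        filter_upwards [eventually_ne_atTop 0] with n hn
        grw [h n, ENNReal.mul_rpow_of_nonneg _ _ (by positivity)]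
        rw [one_div, ENNReal.pow_rpow_inv_natCast hn]
    _ ≤ limsup (fun n : ℕ => (C : ℝ≥0∞) ^ (1 / n : ℝ)) atTop * limsup (fun _ : ℕ => ↑R) atTop :=
        ENNReal.limsup_mul_le' (.inr (by simp)) (.inl (limsup_root_C.trans_lt one_lt_top).ne)
    _ ≤ R := by grw [limsup_root_C, limsup_const, one_mul]

lemma exists_le_mul_pow_of_limsup_rpow_one_div_lt {u : ℕ → ℝ≥0} {R : ℝ≥0}
    (h : limsup (fun n : ℕ => (u n : ℝ≥0∞) ^ (1 / n : ℝ)) atTop < R) :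
    ∃ C : ℝ≥0, ∀ n, u n ≤ C * R ^ n := by
  have R_pos : 0 < R := ENNReal.coe_pos.1 (zero_le.trans_lt h)
  have eventually_le : ∀ᶠ n in atTop, u n / R ^ n ≤ 1 := by
    filter_upwards [eventually_lt_of_limsup_lt h, eventually_gt_atTop 0] with n hlt hn
    rw [one_div, ← not_le, ENNReal.le_rpow_inv_iff (mod_cast hn), not_le, ENNReal.rpow_natCast]
      at hlt
    exact div_le_one_of_le₀ (mod_cast hlt.le) zero_le
  obtain ⟨C, hC⟩ := (isBoundedUnder_of_eventually_le eventually_le).bddAbove_range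
  exact ⟨C, fun n => (div_le_iff₀ (pow_pos R_pos n)).1 (hC ⟨n, rfl⟩)⟩

lemma le_sum_div_pow_mul_pow {n : ℕ} {q : ℝ≥0} (hn : 0 < n) (hq : q ≠ 0)
    (h : ∀ k, a (n + k) ≤ q ^ n * a k) (j : ℕ) :
    a j ≤ (∑ i ∈ Finset.range n, a i / q ^ i) * q ^ j := by
  induction j using Nat.strong_induction_on with
  | _ j ih =>
    obtain hj | hj := lt_or_ge j n
    · rw [← ENNReal.div_le_iff (by simp [hq]) (by finiteness)]
      exact Finset.single_le_sum (f := fun i => a i / q ^ i) (fun _ _ => zero_le)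
        (Finset.mem_range.2 hj)
    · obtain ⟨k, rfl⟩ := Nat.exists_eq_add_of_le hj
      calc a (n + k) ≤ q ^ n * a k := h k
        _ ≤ q ^ n * ((∑ i ∈ Finset.range n, a i / q ^ i) * q ^ k) := by
            gcongr
            exact ih k (by lia)
        _ = (∑ i ∈ Finset.range n, a i / q ^ i) * q ^ (n + k) := by ring

lemma limsup_rpow_one_div_le_iSup_div_rpow_one_div (h0 : ∀ n, a n ≠ 0) (htop : ∀ n, a n ≠ ∞)
    {n : ℕ} (hn : 0 < n) :
    limsup (fun j : ℕ => a j ^ (1 / j : ℝ)) atTop ≤ (⨆ k, a (n + k) / a k) ^ (1 / n : ℝ) := by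
  refine le_of_forall_coe_gt fun q hq => ?_
  have q_ne_zero : q ≠ 0 := (ENNReal.coe_pos.1 (zero_le.trans_lt hq)).ne'
  have step_le (k : ℕ) : a (n + k) ≤ q ^ n * a k := by
    rw [one_div, ← not_le, ENNReal.le_rpow_inv_iff (mod_cast hn), not_le, ENNReal.rpow_natCast]
      at hq
    exact (ENNReal.div_le_iff (h0 k) (htop k)).1 ((le_iSup _ k).trans hq.le)
  have C_ne_top : ∑ i ∈ Finset.range n, a i / q ^ i ≠ ∞ :=
    (ENNReal.sum_lt_top.2 fun i _ => ENNReal.div_lt_top (htop i) (by simp [q_ne_zero])).ne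
  lift ∑ i ∈ Finset.range n, a i / q ^ i to ℝ≥0 using C_ne_top with C hC
  exact limsup_rpow_one_div_le_of_le_mul_pow fun j =>
    hC ▸ le_sum_div_pow_mul_pow hn q_ne_zero step_le j

lemma limsup_rpow_one_div_le_iff {u : ℕ → ℝ≥0} {r : ℝ≥0∞} :
    limsup (fun n : ℕ => (u n : ℝ≥0∞) ^ (1 / n : ℝ)) atTop ≤ r ↔
      ∀ R : ℝ≥0, r < R → ∃ C : ℝ≥0, ∀ n, u n ≤ C * R ^ n := by
  refine ⟨fun h R hR => exists_le_mul_pow_of_limsup_rpow_one_div_lt (h.trans_lt hR),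
    fun h => le_of_forall_coe_gt fun R hR => ?_⟩
  obtain ⟨C, hC⟩ := h R hR
  exact limsup_rpow_one_div_le_of_le_mul_pow fun n => mod_cast hC n

end RootGrowth

section LocalSpectralRadius

variable {E : Type*} [NormedAddCommGroup E] [NormedSpace ℂ E] {T : E →L[ℂ] E} {y : E}
  {r : ℝ≥0∞}

lemma localSpecRad_le_iff : localSpecRad T y ≤ r ↔
    ∀ R : ℝ≥0, r < R → ∃ C : ℝ≥0, ∀ n, ‖(T ^ n) y‖₊ ≤ C * R ^ n :=
  limsup_rpow_one_div_le_iff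

lemma localSpecRad_lt_top : localSpecRad T y < ∞ := by
  refine (limsup_rpow_one_div_le_of_le_mul_pow (C := ‖y‖₊) (R := ‖T‖₊) fun n => ?_).trans_lt
    coe_lt_top
  norm_cast
  induction n with
  | zero => simp
  | succ n ih =>
    rw [pow_succ', pow_succ']
    calc ‖T ((T ^ n) y)‖₊ ≤ ‖T‖₊ * ‖(T ^ n) y‖₊ := T.le_opNNNorm _
      _ ≤ ‖T‖₊ * (‖y‖₊ * ‖T‖₊ ^ n) := by gcongr
      _ = ‖y‖₊ * (‖T‖₊ * ‖T‖₊ ^ n) := by ring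

lemma localSpecRad_pow_apply_le (k : ℕ) : localSpecRad T ((T ^ k) y) ≤ localSpecRad T y := by
  refine localSpecRad_le_iff.2 fun R hR => ?_
  obtain ⟨C, hC⟩ := localSpecRad_le_iff.1 le_rfl R hR
  refine ⟨C * R ^ k, fun n => ?_⟩
  calc ‖(T ^ n) ((T ^ k) y)‖₊ = ‖(T ^ (n + k)) y‖₊ := by rw [pow_add]; rfl
    _ ≤ C * R ^ (n + k) := hC (n + k)
    _ = C * R ^ k * R ^ n := by ring

/-- The vectors of local spectral radius at most `r`. Under condition (C) it is closed, which is
what lets the uniform boundedness principle act on it. -/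
def localSpecRadLE (T : E →L[ℂ] E) (r : ℝ≥0∞) : Submodule ℂ E where
  carrier := {y | localSpecRad T y ≤ r}
  add_mem' {x y} hx hy := localSpecRad_le_iff.2 fun R hR => by
    obtain ⟨C, hC⟩ := localSpecRad_le_iff.1 hx R hR
    obtain ⟨D, hD⟩ := localSpecRad_le_iff.1 hy R hR
    refine ⟨C + D, fun n => ?_⟩
    rw [map_add, add_mul]
    exact (nnnorm_add_le _ _).trans (add_le_add (hC n) (hD n))
  zero_mem' := localSpecRad_le_iff.2 fun _ _ => ⟨0, by simp⟩
  smul_mem' c x hx := localSpecRad_le_iff.2 fun R hR => by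
    obtain ⟨C, hC⟩ := localSpecRad_le_iff.1 hx R hR
    refine ⟨‖c‖₊ * C, fun n => ?_⟩
    rw [map_smul, nnnorm_smul, mul_assoc]
    gcongr
    exact hC n

variable [CompleteSpace E]

lemma exists_nnnorm_pow_apply_le (hcl : IsClosed (localSpecRadLE T r : Set E)) {R : ℝ≥0}
    (hR : r < R) :
    ∃ C : ℝ≥0, ∀ n, ∀ y ∈ localSpecRadLE T r, ‖(T ^ n) y‖₊ ≤ C * R ^ n * ‖y‖₊ := by
  have R_ne_zero : R ≠ 0 := (ENNReal.coe_pos.1 (zero_le.trans_lt hR)).ne'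
  have : CompleteSpace (localSpecRadLE T r) := hcl.completeSpace_coe
  let g (n : ℕ) : localSpecRadLE T r →L[ℂ] E :=
    ((R : ℂ) ^ n)⁻¹ • (T ^ n).comp (localSpecRadLE T r).subtypeL
  have nnnorm_g_apply (n : ℕ) (y : localSpecRadLE T r) :
      ‖g n y‖₊ = (R ^ n)⁻¹ * ‖(T ^ n) (y : E)‖₊ := by
    simp [g, nnnorm_smul]
  obtain ⟨C, hC⟩ := banach_steinhaus (g := g) fun y => by
    obtain ⟨C, hC⟩ := localSpecRad_le_iff.1 y.2 R hR
    refine ⟨C, fun n => NNReal.coe_le_coe.2 ((nnnorm_g_apply n y).trans_le ?_)⟩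
    exact (inv_mul_le_iff₀ (by positivity)).2 ((hC n).trans_eq (mul_comm _ _))
  lift C to ℝ≥0 using (norm_nonneg _).trans (hC 0)
  refine ⟨C, fun n y hy => ?_⟩
  have g_apply_le : ‖g n ⟨y, hy⟩‖₊ ≤ C * ‖y‖₊ := (g n).le_of_opNorm_le (hC n) ⟨y, hy⟩
  rw [nnnorm_g_apply, inv_mul_le_iff₀ (by positivity)] at g_apply_le
  exact g_apply_le.trans_eq (by ring)

lemma localSpecRad_le_spectralRadius : localSpecRad T y ≤ spectralRadius ℂ T := by
  refine localSpecRad_le_iff.2 fun R hR => ?_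
  obtain ⟨C, hC⟩ := limsup_rpow_one_div_le_iff.1
    (spectrum.limsup_pow_nnnorm_pow_one_div_le_spectralRadius T) R hR
  refine ⟨C * ‖y‖₊, fun n => ?_⟩
  calc ‖(T ^ n) y‖₊ ≤ ‖T ^ n‖₊ * ‖y‖₊ := (T ^ n).le_opNNNorm y
    _ ≤ C * R ^ n * ‖y‖₊ := by gcongr; exact hC n
    _ = C * ‖y‖₊ * R ^ n := by ring

lemma spectralRadius_le_of_forall_localSpecRad_le (h : ∀ y, localSpecRad T y ≤ r) :
    spectralRadius ℂ T ≤ r := by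
  rw [← (spectrum.pow_nnnorm_pow_one_div_tendsto_nhds_spectralRadius T).limsup_eq,
    limsup_rpow_one_div_le_iff]
  intro R hR
  have localSpecRadLE_eq_univ : (localSpecRadLE T r : Set E) = Set.univ :=
    Set.eq_univ_of_forall h
  obtain ⟨C, hC⟩ := exists_nnnorm_pow_apply_le (localSpecRadLE_eq_univ ▸ isClosed_univ) hR
  exact ⟨C, fun n => (T ^ n).opNNNorm_le_bound _ fun y => hC n y (h y)⟩

lemma tendsto_iSup_nnnorm_pow_div_rpow_one_div
    (hcl : IsClosed (localSpecRadLE T (localSpecRad T y) : Set E)) (hy : ∀ n, (T ^ n) y ≠ 0) :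
    Tendsto (fun n : ℕ =>
        (⨆ k : ℕ, (‖(T ^ (n + k)) y‖₊ : ℝ≥0∞) / ‖(T ^ k) y‖₊) ^ (1 / n : ℝ))
      atTop (𝓝 (localSpecRad T y)) := by
  refine tendsto_of_le_liminf_of_limsup_le ?_ (le_of_forall_coe_gt fun R hR => ?_)
  · refine le_liminf_of_le (by isBoundedDefault) ?_
    filter_upwards [eventually_gt_atTop 0] with n hn
    exact limsup_rpow_one_div_le_iSup_div_rpow_one_div (fun k => by simpa using hy k)
      (fun _ => coe_ne_top) hn
  · obtain ⟨C, hC⟩ := exists_nnnorm_pow_apply_le hcl hR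
    refine limsup_rpow_one_div_le_of_le_mul_pow (C := C) fun n => iSup_le fun k =>
      ENNReal.div_le_of_le_mul ?_
    rw [pow_add]
    exact_mod_cast hC n _ (localSpecRad_pow_apply_le k)

end LocalSpectralRadius

section LocalSpectrum

variable {E : Type*} [NormedAddCommGroup E] [NormedSpace ℂ E] {T : E →L[ℂ] E} {y : E}
  {r : ℝ≥0∞} {z : ℂ}

lemma inv_mem_localResolventSet {R : ℝ≥0} (h : localSpectrum T y ⊆ Metric.closedEBall 0 r)
    (hR : r < R) (hz0 : z ≠ 0) (hz : ‖z‖₊ ≤ R⁻¹) : z⁻¹ ∈ localResolventSet T y := by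
  by_contra hz_spec
  refine hR.not_ge ?_
  calc (R : ℝ≥0∞) ≤ ‖z⁻¹‖₊ := by
        rw [nnnorm_inv, ENNReal.coe_le_coe]
        exact (le_inv_comm₀ (nnnorm_pos.2 hz0) (ENNReal.coe_pos.1 (zero_le.trans_lt hR))).1 hz
    _ ≤ r := (edist_zero_right z⁻¹).symm.trans_le (h hz_spec)

/-- The power series `∑ zⁿ Tⁿ y`, whose sum solves `g z - z • T (g z) = y`. This is the local
resolvent equation of `T` at `y` near infinity, in the coordinate `z = μ⁻¹`. -/
def orbitSeries (T : E →L[ℂ] E) (y : E) : FormalMultilinearSeries ℂ ℂ E :=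
  fun n => ContinuousMultilinearMap.mkPiRing ℂ (Fin n) ((T ^ n) y)

lemma nnnorm_orbitSeries (n : ℕ) : ‖orbitSeries T y n‖₊ = ‖(T ^ n) y‖₊ :=
  NNReal.eq (ContinuousMultilinearMap.norm_mkPiRing _)

lemma radius_orbitSeries : (orbitSeries T y).radius = (localSpecRad T y)⁻¹ := by
  rw [← inv_inv (orbitSeries T y).radius, FormalMultilinearSeries.radius_inv_eq_limsup]
  simp only [nnnorm_orbitSeries, localSpecRad,
    ENNReal.coe_rpow_of_nonneg _ (Nat.one_div_cast_nonneg _)]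

lemma injective_sub_smul_apply (hT : pointSpectrum T ⊆ {0}) (z : ℂ) :
    Function.Injective fun x : E => x - z • T x := by
  have injective_linear :
      Function.Injective (LinearMap.id - z • (T : E →ₗ[ℂ] E) : E →ₗ[ℂ] E) := by
    refine (injective_iff_map_eq_zero _).2 fun x hx => ?_
    have x_eq : x = z • T x := sub_eq_zero.1 hx
    obtain rfl | hz := eq_or_ne z 0
    · simpa using x_eq
    · by_contra hx0
      exact inv_ne_zero hz (hT ⟨x, hx0, (inv_smul_eq_iff₀ hz).2 x_eq |>.symm⟩)
  exact injective_linear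

variable [CompleteSpace E]

lemma hasFPowerSeriesOnBall_orbitSeries (T : E →L[ℂ] E) (y : E) :
    HasFPowerSeriesOnBall (orbitSeries T y).sum (orbitSeries T y) 0 (localSpecRad T y)⁻¹ := by
  rw [← radius_orbitSeries]
  refine (orbitSeries T y).hasFPowerSeriesOnBall ?_
  rw [radius_orbitSeries]
  exact ENNReal.inv_pos.2 localSpecRad_lt_top.ne

lemma orbitSeries_sum_sub_smul (hz : z ∈ Metric.eball 0 (localSpecRad T y)⁻¹) :
    (orbitSeries T y).sum z - z • T ((orbitSeries T y).sum z) = y := by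
  have hsum : HasSum (fun n : ℕ => z ^ n • (T ^ n) y) ((orbitSeries T y).sum z) := by
    simpa [orbitSeries] using (hasFPowerSeriesOnBall_orbitSeries T y).hasSum hz
  have hsum_shift : HasSum (fun n : ℕ => z ^ (n + 1) • (T ^ (n + 1)) y)
      (z • T ((orbitSeries T y).sum z)) := by
    simpa [pow_succ', smul_smul] using (T.hasSum hsum).const_smul z
  have hsum_tail := (hasSum_nat_add_iff' 1).2 hsum
  rw [← hsum_tail.unique hsum_shift]
  simp

lemma localSpectrum_subset_closedEBall (h : localSpecRad T y ≤ r) :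
    localSpectrum T y ⊆ Metric.closedEBall 0 r := by
  refine Set.compl_subset_comm.1 fun w hw => ?_
  have ne_zero {m : ℂ} (hm : m ∈ (Metric.closedEBall (0 : ℂ) r)ᶜ) : m ≠ 0 := by
    rintro rfl
    simp at hm
  have inv_mem {m : ℂ} (hm : m ∈ (Metric.closedEBall (0 : ℂ) r)ᶜ) :
      m⁻¹ ∈ Metric.eball (0 : ℂ) (localSpecRad T y)⁻¹ := by
    rw [Metric.mem_eball, edist_zero_right, enorm_inv (ne_zero hm), ENNReal.inv_lt_inv]
    exact h.trans_lt (by simpa using hm)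
  refine ⟨_, Metric.isClosed_closedEBall.isOpen_compl, hw,
    fun m => -(m⁻¹ • (orbitSeries T y).sum m⁻¹), fun m hm => ?_, fun m hm => ?_⟩
  · have inv_analytic : AnalyticAt ℂ (fun m : ℂ => m⁻¹) m := analyticAt_inv (ne_zero hm)
    exact (inv_analytic.smul (((hasFPowerSeriesOnBall_orbitSeries T y).analyticOnNhd _
      (inv_mem hm)).comp inv_analytic)).neg
  · calc T (-(m⁻¹ • (orbitSeries T y).sum m⁻¹)) - m • -(m⁻¹ • (orbitSeries T y).sum m⁻¹)
        = (orbitSeries T y).sum m⁻¹ - m⁻¹ • T ((orbitSeries T y).sum m⁻¹) := by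
          rw [map_neg, map_smul, smul_neg, smul_inv_smul₀ (ne_zero hm)]
          abel
      _ = y := orbitSeries_sum_sub_smul (inv_mem hm)

lemma exists_differentiableAt_eventually_sub_smul_eq (hz : z ≠ 0 → z⁻¹ ∈ localResolventSet T y) :
    ∃ g : ℂ → E, DifferentiableAt ℂ g z ∧ ∀ᶠ w in 𝓝 z, g w - w • T (g w) = y := by
  obtain rfl | hz0 := eq_or_ne z 0
  · have sum_series := hasFPowerSeriesOnBall_orbitSeries T y
    refine ⟨_, sum_series.analyticAt.differentiableAt, ?_⟩
    filter_upwards [Metric.eball_mem_nhds 0 sum_series.r_pos] with w hw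
    exact orbitSeries_sum_sub_smul hw
  · obtain ⟨U, hU, hzU, f, hf, hfy⟩ := hz hz0
    refine ⟨fun w => -(w⁻¹ • f w⁻¹), ?_, ?_⟩
    · have inv_diff : DifferentiableAt ℂ (fun w : ℂ => w⁻¹) z := differentiableAt_inv hz0
      exact (inv_diff.smul ((hf _ hzU).differentiableAt.comp z inv_diff)).neg
    · filter_upwards [eventually_ne_nhds hz0, (continuousAt_inv₀ hz0).preimage_mem_nhds
        (hU.mem_nhds hzU)] with w hw hwU
      rw [map_neg, map_smul, smul_neg, smul_inv_smul₀ hw, neg_sub_neg, hfy _ hwU]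

lemma exists_differentiableOn_sub_smul_eq (hT : pointSpectrum T ⊆ {0}) {s : Set ℂ}
    (hs : ∀ z ∈ s, z ≠ 0 → z⁻¹ ∈ localResolventSet T y) :
    ∃ g : ℂ → E, DifferentiableOn ℂ g s ∧ ∀ z ∈ s, g z - z • T (g z) = y := by
  choose! f hf_diff hf_eq using fun z hz => exists_differentiableAt_eventually_sub_smul_eq (hs z hz)
  have f_self_eq (z : ℂ) (hz : z ∈ s) : f z z - z • T (f z z) = y := (hf_eq z hz).self_of_nhds
  refine ⟨fun z => f z z, fun z hz => ?_, f_self_eq⟩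
  refine (hf_diff z hz).differentiableWithinAt.congr_of_eventuallyEq_of_mem ?_ hz
  filter_upwards [self_mem_nhdsWithin, mem_nhdsWithin_of_mem_nhds (hf_eq z hz)] with w hws hw
  exact injective_sub_smul_apply hT w ((f_self_eq w hws).trans hw.symm)

lemma localSpecRad_le_of_localSpectrum_subset (hT : pointSpectrum T ⊆ {0})
    (h : localSpectrum T y ⊆ Metric.closedEBall 0 r) : localSpecRad T y ≤ r := by
  refine le_of_forall_coe_gt fun R hR => ?_
  have R_inv_pos : 0 < R⁻¹ := inv_pos.2 (ENNReal.coe_pos.1 (zero_le.trans_lt hR))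
  obtain ⟨g, hg_diff, hg_eq⟩ := exists_differentiableOn_sub_smul_eq hT
    (s := Metric.closedBall 0 (R⁻¹ : ℝ≥0)) fun z hz hz0 =>
      inv_mem_localResolventSet h hR hz0 (mem_closedBall_zero_iff.1 hz)
  have sum_series := hasFPowerSeriesOnBall_orbitSeries T y
  have sum_eq_g : (orbitSeries T y).sum =ᶠ[𝓝 0] g := by
    filter_upwards [Metric.eball_mem_nhds 0 sum_series.r_pos,
      Metric.closedBall_mem_nhds 0 R_inv_pos] with w hw hwR
    exact injective_sub_smul_apply hT w ((orbitSeries_sum_sub_smul hw).trans (hg_eq w hwR).symm)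
  obtain ⟨_, g_series⟩ := sum_series.hasFPowerSeriesAt.congr sum_eq_g
  have le_radius : ((R⁻¹ : ℝ≥0) : ℝ≥0∞) ≤ (orbitSeries T y).radius :=
    (g_series.exchange_radius (hg_diff.hasFPowerSeriesOnBall R_inv_pos)).r_le
  rwa [radius_orbitSeries, ENNReal.coe_inv (inv_pos.1 R_inv_pos).ne', ENNReal.inv_le_inv]
    at le_radius

lemma localSpectrum_subset_closedEBall_iff (hT : pointSpectrum T ⊆ {0}) :
    localSpectrum T y ⊆ Metric.closedEBall 0 r ↔ localSpecRad T y ≤ r :=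
  ⟨localSpecRad_le_of_localSpectrum_subset hT, localSpectrum_subset_closedEBall⟩

lemma DunfordC.isClosed_localSpecRadLE (hC : DunfordC T) (hT : pointSpectrum T ⊆ {0})
    (r : ℝ≥0∞) : IsClosed (localSpecRadLE T r : Set E) := by
  have isClosed_disc := hC (Metric.closedEBall 0 r) Metric.isClosed_closedEBall
  simp only [localSpectrum_subset_closedEBall_iff hT] at isClosed_disc
  exact isClosed_disc

end LocalSpectrum

section WeightedShift

/-- The product `A (n - 1) * ⋯ * A 1 * A 0` of the first `n` weights. -/
def weightProd {M : Type*} [Monoid M] (A : ℕ → M) : ℕ → M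
  | 0 => 1
  | n + 1 => A n * weightProd A n

variable {H : Type*} [NormedAddCommGroup H] [NormedSpace ℂ H] {p : ℝ≥0∞} [Fact (1 ≤ p)]
  {A : ℕ → H →L[ℂ] H} {S : lp (fun _ : ℕ => H) p →L[ℂ] lp (fun _ : ℕ => H) p}

/-- `S` is the unilateral shift `(x₀, x₁, …) ↦ (0, A₀ x₀, A₁ x₁, …)` on `ℓᵖ(ℕ, H)` with operator
weights `A`. -/
structure IsWeightedShift (A : ℕ → H →L[ℂ] H)
    (S : lp (fun _ : ℕ => H) p →L[ℂ] lp (fun _ : ℕ => H) p) : Prop where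
  apply_zero (x) : S x 0 = 0
  apply_succ (x) (n : ℕ) : S x (n + 1) = A n (x n)

lemma denseRange_weightProd (hA : ∀ n, DenseRange (A n)) (n : ℕ) :
    DenseRange (weightProd A n : H →L[ℂ] H) := by
  induction n with
  | zero => exact Function.surjective_id.denseRange
  | succ n ih => exact (hA n).comp ih (A n).continuous

namespace IsWeightedShift

lemma pointSpectrum_subset (hS : IsWeightedShift A S) : pointSpectrum S ⊆ {0} := by
  rintro m ⟨x, hx0, hx⟩
  by_contra hm
  refine hx0 (lp.ext (funext fun n => ?_))
  have apply_eq (n : ℕ) : m • x n = S x n := by rw [hx]; rfl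
  induction n with
  | zero => exact (smul_eq_zero_iff_right hm).1 ((apply_eq 0).trans (hS.apply_zero x))
  | succ n ih =>
    refine (smul_eq_zero_iff_right hm).1 ?_
    rw [apply_eq, hS.apply_succ, ih]
    exact map_zero (A n)

lemma apply_single (hS : IsWeightedShift A S) (k : ℕ) (v : H) :
    S (lp.single p k v) = lp.single p (k + 1) (A k v) := by
  refine lp.ext (funext fun n => ?_)
  cases n with
  | zero => rw [hS.apply_zero, lp.single_apply_ne _ _ _ k.succ_ne_zero.symm]
  | succ n =>
    rw [hS.apply_succ]
    obtain rfl | hn := eq_or_ne n k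
    · rw [lp.single_apply_self, lp.single_apply_self]
    · rw [lp.single_apply_ne _ _ _ hn, lp.single_apply_ne _ _ _ (by lia), map_zero]

lemma pow_apply_single_zero (hS : IsWeightedShift A S) (n : ℕ) (x : H) :
    (S ^ n) (lp.single p 0 x) = lp.single p n (weightProd A n x) := by
  induction n with
  | zero => rfl
  | succ n ih =>
    rw [pow_succ']
    exact (congrArg S ih).trans (hS.apply_single n _)

lemma nnnorm_pow_apply_single_zero (hS : IsWeightedShift A S) (n : ℕ) (x : H) :
    ‖(S ^ n) (lp.single p 0 x)‖₊ = ‖weightProd A n x‖₊ := by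
  rw [hS.pow_apply_single_zero]
  exact NNReal.eq (lp.norm_single (zero_lt_one.trans_le Fact.out) _ _)

lemma localSpecRad_single_zero (hS : IsWeightedShift A S) (x : H) :
    localSpecRad S (lp.single p 0 x) =
      limsup (fun n : ℕ => (‖weightProd A n x‖₊ : ℝ≥0∞) ^ (1 / n : ℝ)) atTop := by
  simp only [localSpecRad, hS.nnnorm_pow_apply_single_zero]

lemma mem_of_forall_pow_apply_single_zero_mem (hS : IsWeightedShift A S) (hp : p ≠ ∞)
    (hA : ∀ n, DenseRange (A n)) {K : Submodule ℂ (lp (fun _ : ℕ => H) p)}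
    (hK : IsClosed (K : Set (lp (fun _ : ℕ => H) p)))
    (hmem : ∀ n x, (S ^ n) (lp.single p 0 x) ∈ K) (y : lp (fun _ : ℕ => H) p) : y ∈ K := by
  have single_mem (n : ℕ) (v : H) : lp.single p n v ∈ K := by
    refine (denseRange_weightProd hA n).induction_on v
      (hK.preimage (lp.isometry_single n).continuous) fun x => ?_
    rw [← hS.pow_apply_single_zero]
    exact hmem n x
  exact hK.mem_of_tendsto (lp.hasSum_single hp y)
    (.of_forall fun s => K.sum_mem fun n _ => single_mem n (y n))

end IsWeightedShift

end WeightedShift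

theorem stmt18_general {H : Type*} [NormedAddCommGroup H] [NormedSpace ℂ H] [CompleteSpace H]
    {p : ℝ≥0∞} [Fact (1 ≤ p)] (hp : p ≠ ∞) {A : ℕ → H →L[ℂ] H} (hA : ∀ n, DenseRange (A n))
    {S : lp (fun _ : ℕ => H) p →L[ℂ] lp (fun _ : ℕ => H) p} (hS : IsWeightedShift A S)
    (hC : DunfordC S) :
    spectralRadius ℂ S =
      ⨆ x : H, limsup (fun n : ℕ => (‖weightProd A n x‖₊ : ℝ≥0∞) ^ (1 / n : ℝ)) atTop ∧
    ∀ x : H, (∀ n, weightProd A n x ≠ 0) →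
      Tendsto (fun n : ℕ =>
          (⨆ k : ℕ, (‖weightProd A (n + k) x‖₊ : ℝ≥0∞) / ‖weightProd A k x‖₊) ^ (1 / n : ℝ))
        atTop
        (𝓝 (limsup (fun n : ℕ => (‖weightProd A n x‖₊ : ℝ≥0∞) ^ (1 / n : ℝ)) atTop)) := by
  have isClosed_localSpecRadLE := hC.isClosed_localSpecRadLE hS.pointSpectrum_subset
  simp only [← hS.localSpecRad_single_zero]
  refine ⟨le_antisymm (spectralRadius_le_of_forall_localSpecRad_le ?_)
    (iSup_le fun x => localSpecRad_le_spectralRadius), fun x hx => ?_⟩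
  · exact hS.mem_of_forall_pow_apply_single_zero_mem hp hA (isClosed_localSpecRadLE _) fun n x =>
      (localSpecRad_pow_apply_le n).trans (le_iSup (fun x => localSpecRad S (lp.single p 0 x)) x)
  · simp only [← hS.nnnorm_pow_apply_single_zero]
    refine tendsto_iSup_nnnorm_pow_div_rpow_one_div (isClosed_localSpecRadLE _) fun n => ?_
    rw [← nnnorm_ne_zero_iff, hS.nnnorm_pow_apply_single_zero, nnnorm_ne_zero_iff]
    exact hx n

section UnitWeights

variable {H : Type*} [NormedAddCommGroup H] [InnerProductSpace ℂ H] (A : ℕ → (H →L[ℂ] H)ˣ)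

lemma coe_wB (n : ℕ) :
    ((wB A n : (H →L[ℂ] H)ˣ) : H →L[ℂ] H) = weightProd (fun k => (A k : H →L[ℂ] H)) n := by
  induction n with
  | zero => rfl
  | succ n ih => rw [wB, weightProd, Units.val_mul, ih]

lemma wB_apply_ne_zero {x : H} (hx : x ≠ 0) (n : ℕ) : (wB A n : H →L[ℂ] H) x ≠ 0 :=
  (map_ne_zero_iff _ (ContinuousLinearEquiv.ofUnit (wB A n)).injective).2 hx

lemma R3plus_eq_iSup : R3plus A =
    ⨆ x : H, limsup (fun n : ℕ => (‖(wB A n : H →L[ℂ] H) x‖₊ : ℝ≥0∞) ^ (1 / n : ℝ)) atTop := by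
  refine le_antisymm (iSup_mono fun x => iSup_le fun _ => le_rfl) (iSup_le fun x => ?_)
  obtain rfl | hx := eq_or_ne x 0
  · exact (limsup_rpow_one_div_le_of_le_mul_pow (C := 0) (R := 0) (by simp)).trans zero_le
  · exact le_iSup₂_of_le x hx le_rfl

end UnitWeights

theorem stmt18 {H : Type*} [NormedAddCommGroup H] [InnerProductSpace ℂ H] [CompleteSpace H]
    (A : ℕ → (H →L[ℂ] H)ˣ)
    (hbdd : ∃ C : ℝ, ∀ n, ‖(A n : H →L[ℂ] H)‖ ≤ C)
    (S : lp (fun _ : ℕ => H) 2 →L[ℂ] lp (fun _ : ℕ => H) 2)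
    (hS0 : ∀ x : lp (fun _ : ℕ => H) 2, S x 0 = 0)
    (hS : ∀ (x : lp (fun _ : ℕ => H) 2) (n : ℕ), S x (n + 1) = (A n : H →L[ℂ] H) (x n))
    (hC : DunfordC S) :
    spectralRadius ℂ S = R3plus A ∧
    ∀ x : H, x ≠ 0 →
      Tendsto (fun n : ℕ =>
          (⨆ k : ℕ, (‖(wB A (n + k) : H →L[ℂ] H) x‖₊ : ℝ≥0∞) /
            (‖(wB A k : H →L[ℂ] H) x‖₊ : ℝ≥0∞)) ^ (1 / n : ℝ))
        atTop
        (𝓝 (limsup (fun n : ℕ =>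
          (‖(wB A n : H →L[ℂ] H) x‖₊ : ℝ≥0∞) ^ (1 / n : ℝ)) atTop)) := by
  have general := stmt18_general ENNReal.ofNat_ne_top
    (fun n => (ContinuousLinearEquiv.ofUnit (A n)).surjective.denseRange) ⟨hS0, hS⟩ hC
  simp only [← coe_wB, ← R3plus_eq_iSup] at general
  exact ⟨general.1, fun x hx => general.2 x (wB_apply_ne_zero A hx)⟩
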